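/- Let g be a complex simple Lie algebra, G = Aut(g)⁰ its adjoint group acting on g, and t ⊆ g a fixed Cartan subalgebra. For every φ ∈ G' there exists an element g ∈ G such that (g ∘ φ) restricted to t is the identity map on t. -/

import Mathlib

noncomputable section

/-- A function `V → ℂ` is a polynomial function if it lies in the subalgebra of
functions generated by the linear functionals, i.e. it is given by a polynomial
in linear coordinates. -/
def IsPolyFun {V : Type*} [AddCommGroup V] [Module ℂ V] (f : V → ℂ) : Prop :=
  f ∈ Algebra.adjoin ℂ (Set.range fun l : V →ₗ[ℂ] ℂ => (l : V → ℂ))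

/-- Given a subgroup `G` of `GL(V)`, the group `G'` of all linear automorphisms of `V`
preserving every `G`-invariant polynomial function on `V`. -/
def primeGroup {V : Type*} [AddCommGroup V] [Module ℂ V]
    (G : Subgroup (V ≃ₗ[ℂ] V)) : Subgroup (V ≃ₗ[ℂ] V) where
  carrier := {φ | ∀ f : V → ℂ, IsPolyFun f →
      (∀ g ∈ G, ∀ v : V, f (g v) = f v) → ∀ v : V, f (φ v) = f v}
  one_mem' := by intro f _ _ v; rfl
  mul_mem' := by
    intro a b ha hb f hf hinv v
    have h2 : f (a (b v)) = f (b v) := ha f hf hinv (b v)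
    exact h2.trans (hb f hf hinv v)
  inv_mem' := by
    intro a ha f hf hinv v
    have h := ha f hf hinv (a⁻¹ v)
    have : a (a⁻¹ v) = v := a.apply_symm_apply v
    rw [this] at h
    exact h.symm

/-- The algebraic exponential of an endomorphism of a finite-dimensional space
(intended for nilpotent endomorphisms, where the series is a finite sum). -/
def endExp {g : Type*} [AddCommGroup g] [Module ℂ g] [FiniteDimensional ℂ g]
    (A : Module.End ℂ g) : Module.End ℂ g :=
  ∑ k ∈ Finset.range (Module.finrank ℂ g + 1), (k.factorial : ℂ)⁻¹ • A ^ k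

/-- The adjoint group `G = Aut(g)⁰` of a semisimple Lie algebra `g`: the subgroup of
`GL(g)` generated by the exponentials of nilpotent inner derivations `ad x`. -/
def adjointGroup (g : Type*) [LieRing g] [LieAlgebra ℂ g] [FiniteDimensional ℂ g] :
    Subgroup (g ≃ₗ[ℂ] g) :=
  Subgroup.closure {u : g ≃ₗ[ℂ] g | ∃ x : g,
    IsNilpotent (LieAlgebra.ad ℂ g x) ∧ (u : g →ₗ[ℂ] g) = endExp (LieAlgebra.ad ℂ g x)}

/-- The subgroup of `GL(g)` fixing a subalgebra `t` pointwise. -/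
def pointwiseStab {g : Type*} [LieRing g] [LieAlgebra ℂ g]
    (t : LieSubalgebra ℂ g) : Subgroup (g ≃ₗ[ℂ] g) where
  carrier := {u | ∀ x ∈ t, u x = x}
  one_mem' := by intro x _; rfl
  mul_mem' := by
    intro a b ha hb x hx
    have : a (b x) = a x := by rw [hb x hx]
    exact this.trans (ha x hx)
  inv_mem' := by
    intro a ha x hx
    conv_lhs => rw [← ha x hx]
    exact a.symm_apply_apply x

/-- The maximal torus of the adjoint group corresponding to a Cartan subalgebra `t`:
the elements of the adjoint group acting trivially on `t`. -/
def maximalTorus (g : Type*) [LieRing g] [LieAlgebra ℂ g] [FiniteDimensional ℂ g]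
    (t : LieSubalgebra ℂ g) : Subgroup (g ≃ₗ[ℂ] g) :=
  adjointGroup g ⊓ pointwiseStab t

/-!
Two facts about the invariants suffice.

A Weyl-invariant polynomial on `t` extends to an `adjointGroup g`-invariant polynomial on `g`
(the surjective half of Chevalley's restriction theorem). Every regular element is conjugate into
`t`, so the polynomial extends to an invariant function on the regular elements; this function is
analytic, because the conjugating element can be chosen analytically, and has polynomial growth,
because the eigenvalues of `ad y` bound the conjugate of `y` in `t`. Since the regular elements are
the complement of the zero set of a polynomial, Liouville's theorem makes the extension polynomial.

Differentiating the invariants `y ↦ tr ((ad y) ^ n)` shows that `φ` preserves all the numbers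
`tr (q(ad y) ∘ ad v)`, `q` a polynomial. If `x ∈ t` is regular with distinct weights, each `ad h`,
`h ∈ t`, is a polynomial in `ad x`, and nondegeneracy of the Killing form gives `⁅φ x, φ h⁆ = 0`.
Hence `φ` maps `t` into the centralizer of the regular element `φ x`, a conjugate of `t`.

After composing with an element of the adjoint group, `φ` thus preserves `t` and, by the first fact,
every Weyl-invariant polynomial on `t`. As the Weyl group `W` is finite, invariant polynomials
separate its orbits and `W' = W`; so `φ` acts on `t` as an element of the adjoint group.
-/

open Filter Topology

namespace IsPolyFun

section Algebra

variable {V W : Type*} [AddCommGroup V] [Module ℂ V] [AddCommGroup W] [Module ℂ W]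
  {f f₁ f₂ : V → ℂ}

lemma const (c : ℂ) : IsPolyFun fun _ : V => c :=
  Subalgebra.algebraMap_mem _ c

lemma of_linearMap (l : V →ₗ[ℂ] ℂ) : IsPolyFun fun v => l v :=
  Algebra.subset_adjoin ⟨l, rfl⟩

lemma add (hf₁ : IsPolyFun f₁) (hf₂ : IsPolyFun f₂) : IsPolyFun fun v => f₁ v + f₂ v :=
  Subalgebra.add_mem _ hf₁ hf₂

lemma mul (hf₁ : IsPolyFun f₁) (hf₂ : IsPolyFun f₂) : IsPolyFun fun v => f₁ v * f₂ v :=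
  Subalgebra.mul_mem _ hf₁ hf₂

lemma sub (hf₁ : IsPolyFun f₁) (hf₂ : IsPolyFun f₂) : IsPolyFun fun v => f₁ v - f₂ v :=
  Subalgebra.sub_mem _ hf₁ hf₂

lemma sum {ι : Type*} {s : Finset ι} {f : ι → V → ℂ} (hf : ∀ i ∈ s, IsPolyFun (f i)) :
    IsPolyFun fun v => ∑ i ∈ s, f i v := by
  simp only [← Finset.sum_apply]
  exact Subalgebra.sum_mem _ hf

lemma prod {ι : Type*} {s : Finset ι} {f : ι → V → ℂ} (hf : ∀ i ∈ s, IsPolyFun (f i)) :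
    IsPolyFun fun v => ∏ i ∈ s, f i v := by
  simp only [← Finset.prod_apply]
  exact Subalgebra.prod_mem _ hf

@[elab_as_elim]
lemma induction {motive : (f : V → ℂ) → IsPolyFun f → Prop}
    (const : ∀ c : ℂ, motive (fun _ => c) (const c))
    (linear : ∀ l : V →ₗ[ℂ] ℂ, motive (fun v => l v) (of_linearMap l))
    (add : ∀ f₁ f₂ hf₁ hf₂, motive f₁ hf₁ → motive f₂ hf₂ → motive _ (add hf₁ hf₂))
    (mul : ∀ f₁ f₂ hf₁ hf₂, motive f₁ hf₁ → motive f₂ hf₂ → motive _ (mul hf₁ hf₂))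
    (hf : IsPolyFun f) : motive f hf := by
  induction hf using Algebra.adjoin_induction with
  | mem _ h => obtain ⟨l, rfl⟩ := h; exact linear l
  | algebraMap c => exact const c
  | add _ _ hf₁ hf₂ h₁ h₂ => exact add _ _ hf₁ hf₂ h₁ h₂
  | mul _ _ hf₁ hf₂ h₁ h₂ => exact mul _ _ hf₁ hf₂ h₁ h₂

lemma comp_linearMap (hf : IsPolyFun f) (e : W →ₗ[ℂ] V) : IsPolyFun fun w => f (e w) := by
  induction hf using IsPolyFun.induction with
  | const c => exact const c
  | linear l => exact of_linearMap (l ∘ₗ e)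
  | add _ _ _ _ h₁ h₂ => exact h₁.add h₂
  | mul _ _ _ _ h₁ h₂ => exact h₁.mul h₂

lemma comp_sub_const (hf : IsPolyFun f) (a : V) : IsPolyFun fun v => f (v - a) := by
  induction hf using IsPolyFun.induction with
  | const c => exact const c
  | linear l => simpa only [map_sub] using (of_linearMap l).sub (const (l a))
  | add _ _ _ _ h₁ h₂ => exact h₁.add h₂
  | mul _ _ _ _ h₁ h₂ => exact h₁.mul h₂

lemma exists_polynomial_eval_line (hf : IsPolyFun f) (a v : V) :
    ∃ q : Polynomial ℂ, ∀ z : ℂ, f (a + z • v) = q.eval z := by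
  induction hf using IsPolyFun.induction with
  | const c => exact ⟨.C c, by simp⟩
  | linear l => exact ⟨.C (l a) + .C (l v) * .X, fun z => by simp [mul_comm z]⟩
  | add _ _ _ _ h₁ h₂ =>
    obtain ⟨p, hp⟩ := h₁
    obtain ⟨q, hq⟩ := h₂
    exact ⟨p + q, by simp [hp, hq]⟩
  | mul _ _ _ _ h₁ h₂ =>
    obtain ⟨p, hp⟩ := h₁
    obtain ⟨q, hq⟩ := h₂
    exact ⟨p * q, by simp [hp, hq]⟩

lemma finite_setOf_line_eq_zero (hf : IsPolyFun f) {a v : V} {z₀ : ℂ} (h : f (a + z₀ • v) ≠ 0) :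
    {z : ℂ | f (a + z • v) = 0}.Finite := by
  obtain ⟨q, hq⟩ := hf.exists_polynomial_eval_line a v
  have hq0 : q ≠ 0 := by
    rintro rfl
    simp [hq] at h
  simpa only [hq, Polynomial.IsRoot] using Polynomial.finite_setOfPred_isRoot hq0

lemma eq_of_forall_ne_zero (hf₁ : IsPolyFun f₁) (hf₂ : IsPolyFun f₂) (hf : IsPolyFun f) {x : V}
    (hx : f x ≠ 0) (h : ∀ v, f v ≠ 0 → f₁ v = f₂ v) : f₁ = f₂ := by
  ext a
  by_contra ha
  have hfin : {z : ℂ | f (a + z • (x - a)) = 0}.Finite :=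
    hf.finite_setOf_line_eq_zero (z₀ := 1) (by simpa using hx)
  have hfin' : {z : ℂ | f₁ (a + z • (x - a)) - f₂ (a + z • (x - a)) = 0}.Finite :=
    (hf₁.sub hf₂).finite_setOf_line_eq_zero (z₀ := 0) (by simpa using sub_ne_zero.2 ha)
  obtain ⟨z, hz⟩ := (hfin.union hfin').exists_notMem
  simp only [Set.mem_union, Set.mem_ofPred_eq, not_or] at hz
  exact hz.2 (sub_eq_zero.2 (h _ hz.1))

lemma of_mvPolynomial {ι : Type*} (b : Module.Basis ι ℂ V) (p : MvPolynomial ι ℂ) :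
    IsPolyFun fun v => MvPolynomial.eval (b.repr v) p := by
  induction p using MvPolynomial.induction_on with
  | C a => simpa using const a
  | add p q hp hq => simpa using hp.add hq
  | mul_X p i hp => simpa using hp.mul (of_linearMap (b.coord i))

lemma of_multilinearMap [FiniteDimensional ℂ V] {n : ℕ}
    (p : MultilinearMap ℂ (fun _ : Fin n => V) ℂ) : IsPolyFun fun v => p fun _ => v := by
  let b := Module.finBasis ℂ V
  have expand : (fun v => p fun _ => v) = fun v => ∑ r : Fin n → Fin (Module.finrank ℂ V),
      (∏ i, b.coord (r i) v) * p fun i => b (r i) := by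
    ext v
    conv_lhs => rw [← b.sum_repr v, MultilinearMap.map_sum]
    simp only [MultilinearMap.map_smul_univ, smul_eq_mul, Module.Basis.coord_apply]
  rw [expand]
  exact sum fun r _ => (prod fun i _ => of_linearMap _).mul (const _)

lemma linearMap_pow [FiniteDimensional ℂ V] {R : Type*} [Ring R] [Algebra ℂ R]
    (A : V →ₗ[ℂ] R) (L : R →ₗ[ℂ] ℂ) (n : ℕ) : IsPolyFun fun v => L (A v ^ n) := by
  simpa [List.ofFn_const] using of_multilinearMap
    (L.compMultilinearMap ((MultilinearMap.mkPiAlgebraFin ℂ n R).compLinearMap fun _ => A))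

lemma charpoly_coeff [FiniteDimensional ℂ V] [FiniteDimensional ℂ W]
    (A : V →ₗ[ℂ] Module.End ℂ W) (n : ℕ) : IsPolyFun fun v => (A v).charpoly.coeff n := by
  simpa only [LinearMap.polyCharpoly_coeff_eval] using
    of_mvPolynomial (Module.finBasis ℂ V) ((A.polyCharpoly (Module.finBasis ℂ V)).coeff n)

end Algebra

section Analysis

variable {V : Type*} [NormedAddCommGroup V] [NormedSpace ℂ V] {f : V → ℂ}

lemma analyticAt [FiniteDimensional ℂ V] (hf : IsPolyFun f) (x : V) : AnalyticAt ℂ f x := by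
  induction hf using IsPolyFun.induction with
  | const c => exact analyticAt_const
  | linear l => exact l.toContinuousLinearMap.analyticAt x
  | add _ _ _ _ h₁ h₂ => exact h₁.add h₂
  | mul _ _ _ _ h₁ h₂ => exact h₁.mul h₂

lemma continuous [FiniteDimensional ℂ V] (hf : IsPolyFun f) : Continuous f :=
  continuous_iff_continuousAt.2 fun x => (hf.analyticAt x).continuousAt

lemma exists_norm_le [FiniteDimensional ℂ V] (hf : IsPolyFun f) :
    ∃ (C : ℝ) (d : ℕ), ∀ v, ‖f v‖ ≤ C * (1 + ‖v‖) ^ d := by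
  induction hf using IsPolyFun.induction with
  | const c => exact ⟨‖c‖, 0, by simp⟩
  | linear l =>
    refine ⟨‖l.toContinuousLinearMap‖, 1, fun v => ?_⟩
    calc ‖l v‖ ≤ ‖l.toContinuousLinearMap‖ * ‖v‖ := l.toContinuousLinearMap.le_opNorm v
      _ ≤ ‖l.toContinuousLinearMap‖ * (1 + ‖v‖) ^ 1 := by gcongr; simp
  | add _ _ _ _ h₁ h₂ =>
    obtain ⟨C₁, d₁, h₁⟩ := h₁
    obtain ⟨C₂, d₂, h₂⟩ := h₂
    refine ⟨|C₁| + |C₂|, max d₁ d₂, fun v => ?_⟩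
    have hv : 1 ≤ 1 + ‖v‖ := by simp
    rw [add_mul]
    refine norm_add_le_of_le ((h₁ v).trans ?_) ((h₂ v).trans ?_)
    · gcongr
      exacts [le_abs_self C₁, le_max_left ..]
    · gcongr
      exacts [le_abs_self C₂, le_max_right ..]
  | mul f₁ f₂ _ _ h₁ h₂ =>
    obtain ⟨C₁, d₁, h₁⟩ := h₁
    obtain ⟨C₂, d₂, h₂⟩ := h₂
    refine ⟨C₁ * C₂, d₁ + d₂, fun v => ?_⟩
    calc ‖f₁ v * f₂ v‖ = ‖f₁ v‖ * ‖f₂ v‖ := norm_mul ..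
      _ ≤ (C₁ * (1 + ‖v‖) ^ d₁) * (C₂ * (1 + ‖v‖) ^ d₂) :=
        mul_le_mul (h₁ v) (h₂ v) (norm_nonneg _) ((norm_nonneg _).trans (h₁ v))
      _ = C₁ * C₂ * (1 + ‖v‖) ^ (d₁ + d₂) := by ring

lemma isPreconnected_setOf_ne_zero (hf : IsPolyFun f) : IsPreconnected {v | f v ≠ 0} := by
  refine isPreconnected_of_forall_pair fun a ha b hb => ?_
  have hfin : {z : ℂ | f (a + z • (b - a)) = 0}.Finite :=
    hf.finite_setOf_line_eq_zero (z₀ := 0) (by simpa using ha)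
  have hconn : IsPreconnected {z : ℂ | f (a + z • (b - a)) = 0}ᶜ :=
    (hfin.countable.isPathConnected_compl_of_one_lt_rank (by simp)).isConnected.isPreconnected
  refine ⟨_, Set.image_subset_iff.2 fun z hz => hz, ⟨0, ?_, by simp⟩, ⟨1, ?_, by simp⟩,
    hconn.image (fun z : ℂ => a + z • (b - a)) (by fun_prop)⟩
  · simpa using ha
  · simpa using hb

lemma dense_setOf_ne_zero (hf : IsPolyFun f) {x : V} (hx : f x ≠ 0) : Dense {v | f v ≠ 0} := by
  intro a
  have hfin : {z : ℂ | f (a + z • (x - a)) = 0}.Finite :=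
    hf.finite_setOf_line_eq_zero (z₀ := 1) (by simpa using hx)
  have hline : Continuous fun z : ℂ => a + z • (x - a) := by fun_prop
  have ha : a ∈ closure ((fun z : ℂ => a + z • (x - a)) '' {z : ℂ | f (a + z • (x - a)) = 0}ᶜ) :=
    hline.range_subset_closure_image_dense (hfin.countable.dense_compl ℝ) ⟨0, by simp⟩
  exact closure_mono (Set.image_subset_iff.2 fun z hz => hz) ha

end Analysis

end IsPolyFun

section Extension

open Complex

lemma iteratedDeriv_zero_eq_zero_of_norm_le {q : ℂ → ℂ} (hq : Differentiable ℂ q) {C : ℝ} {d : ℕ}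
    (hb : ∀ z, ‖q z‖ ≤ C * (1 + ‖z‖) ^ d) {k : ℕ} (hk : d < k) : iteratedDeriv k q 0 = 0 := by
  have hC : 0 ≤ C := (norm_nonneg _).trans (by simpa using hb 0)
  have cauchy : ∀ᶠ R : ℝ in atTop, ‖iteratedDeriv k q 0‖ ≤ k.factorial * (C * 2 ^ d) / R := by
    filter_upwards [eventually_ge_atTop 1] with R hR
    have hR₀ : 0 < R := by linarith
    have hq_sphere : ∀ z ∈ Metric.sphere (0 : ℂ) R, ‖q z‖ ≤ C * (1 + R) ^ d := fun z hz => by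
      simpa [mem_sphere_zero_iff_norm.1 hz] using hb z
    calc ‖iteratedDeriv k q 0‖ ≤ k.factorial * (C * (1 + R) ^ d) / R ^ k :=
        norm_iteratedDeriv_le_of_forall_mem_sphere_norm_le k hR₀ hq.diffContOnCl hq_sphere
      _ ≤ k.factorial * (C * (2 * R) ^ d) / R ^ (d + 1) := by
        gcongr
        · linarith
        · exact hk
      _ = k.factorial * (C * 2 ^ d) / R := by
        field_simp
        ring
  exact norm_le_zero_iff.1 <| ge_of_tendsto (tendsto_const_nhds.div_atTop tendsto_id) cauchy

lemma exists_differentiable_eqOn_compl_of_finite {q : ℂ → ℂ} {S : Set ℂ} (hS : S.Finite)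
    (hq : ∀ z ∉ S, DifferentiableAt ℂ q z) {B : ℂ → ℝ} (hB : Continuous B)
    (hqB : ∀ z ∉ S, ‖q z‖ ≤ B z) : ∃ r : ℂ → ℂ, Differentiable ℂ r ∧ Set.EqOn r q Sᶜ := by
  let r : ℂ → ℂ := fun z => limUnder (𝓝[≠] z) q
  have hrq : Set.EqOn r q Sᶜ := fun z hz =>
    ((hq z hz).continuousAt.tendsto.mono_left nhdsWithin_le_nhds).limUnder_eq
  refine ⟨r, fun z => ?_, hrq⟩
  have isolated : ∀ᶠ w in 𝓝 z, w ∉ S \ {z} :=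
    (hS.subset Set.sdiff_subset).isClosed.isOpen_compl.mem_nhds (by simp)
  have bounded : ∀ᶠ w in 𝓝 z, B w < B z + 1 := hB.continuousAt.eventually_lt_const (by linarith)
  have hU := isolated.and bounded
  set U := {w | w ∉ S \ {z} ∧ B w < B z + 1}
  have notMem : ∀ w ∈ U \ {z}, w ∉ S := fun w hw hwS => hw.1.1 ⟨hwS, hw.2⟩
  have hd : DifferentiableOn ℂ q (U \ {z}) := fun w hw =>
    (hq w (notMem w hw)).differentiableWithinAt
  have hbdd : BddAbove (norm ∘ q '' (U \ {z})) := by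
    refine ⟨B z + 1, ?_⟩
    rintro _ ⟨w, hw, rfl⟩
    exact (hqB w (notMem w hw)).trans hw.1.2.le
  refine ((differentiableOn_update_limUnder_of_bddAbove hU hd hbdd).differentiableAt hU)
    |>.congr_of_eventuallyEq ?_
  filter_upwards [hU] with w hw
  rcases eq_or_ne w z with rfl | hwz
  · simp [r]
  · rw [Function.update_of_ne hwz, hrq (notMem w ⟨hw, hwz⟩)]

lemma eq_sum_iteratedDeriv_of_norm_le {q : ℂ → ℂ} {S : Set ℂ} (hS : S.Finite) (h0 : (0 : ℂ) ∉ S)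
    (hq : ∀ z ∉ S, DifferentiableAt ℂ q z) {C : ℝ} {d : ℕ}
    (hb : ∀ z ∉ S, ‖q z‖ ≤ C * (1 + ‖z‖) ^ d) {z : ℂ} (hz : z ∉ S) :
    q z = ∑ k ∈ Finset.range (d + 1), (k.factorial : ℂ)⁻¹ * iteratedDeriv k q 0 * z ^ k := by
  obtain ⟨r, hr, hrq⟩ := exists_differentiable_eqOn_compl_of_finite hS hq (by fun_prop) hb
  have hrb : ∀ w, ‖r w‖ ≤ C * (1 + ‖w‖) ^ d := by
    have hclosed : IsClosed {w | ‖r w‖ ≤ C * (1 + ‖w‖) ^ d} :=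
      isClosed_le hr.continuous.norm (by fun_prop)
    exact fun w => hclosed.closure_subset_iff.2 (fun w hw => by simpa [hrq hw] using hb w hw)
      (hS.countable.dense_compl ℝ w)
  have deriv_eq : ∀ k, iteratedDeriv k q 0 = iteratedDeriv k r 0 := fun k =>
    ((hrq.eventuallyEq_of_mem (hS.isClosed.isOpen_compl.mem_nhds h0)).iteratedDeriv_eq k).symm
  have taylor := (hasSum_taylorSeries_of_entire hr 0 z).tsum_eq
  rw [tsum_eq_sum (s := Finset.range (d + 1)) fun k hk => ?_] at taylor
  · rw [← hrq hz, ← taylor]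
    refine Finset.sum_congr rfl fun k _ => ?_
    rw [deriv_eq, sub_zero, smul_eq_mul, smul_eq_mul]
    ring
  · rw [iteratedDeriv_zero_eq_zero_of_norm_le hr hrb (by simpa using hk), smul_zero, smul_zero]

variable {V : Type*} [NormedAddCommGroup V] [NormedSpace ℂ V]

lemma iteratedDeriv_line_of_hasFPowerSeriesAt {F : V → ℂ} {p : FormalMultilinearSeries ℂ V ℂ}
    {x : V} (hp : HasFPowerSeriesAt F p x) (v : V) (k : ℕ) :
    iteratedDeriv k (fun z : ℂ => F (x + z • v)) 0 = k.factorial * p k fun _ => v := by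
  have hshift : HasFPowerSeriesAt (fun y => F (x + y)) p
      (ContinuousLinearMap.toSpanSingleton ℂ v 0) := by
    simpa [add_comm] using hp.comp_sub (-x)
  obtain ⟨R, hR⟩ := hshift
  rw [iteratedDeriv_eq_iteratedFDeriv, ← nsmul_eq_mul]
  refine (hR.compContinuousLinearMap.factorial_smul 1 k).symm.trans ?_
  simp only [FormalMultilinearSeries.compContinuousLinearMap_apply, Function.comp_def,
    ContinuousLinearMap.toSpanSingleton_apply, one_smul]

/-- The Taylor polynomial of degree `d` of `F` at `x` is the extension: on every complex line
through `x` the function `F` has only finitely many, removable, singularities, so Liouville's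
theorem identifies its restriction with a polynomial. -/
lemma exists_isPolyFun_eq_of_analyticAt [FiniteDimensional ℂ V] {D F : V → ℂ} (hD : IsPolyFun D)
    {x : V} (hx : D x ≠ 0) (hF : ∀ y, D y ≠ 0 → AnalyticAt ℂ F y) {C : ℝ} {d : ℕ}
    (hb : ∀ y, D y ≠ 0 → ‖F y‖ ≤ C * (1 + ‖y‖) ^ d) :
    ∃ Q : V → ℂ, IsPolyFun Q ∧ ∀ y, D y ≠ 0 → Q y = F y := by
  have hC : 0 ≤ C :=
    nonneg_of_mul_nonneg_left ((norm_nonneg _).trans (hb x hx)) (by positivity)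
  obtain ⟨p, hp⟩ := hF x hx
  refine ⟨fun y => ∑ k ∈ Finset.range (d + 1), p k fun _ => y - x, .sum fun k _ =>
    (IsPolyFun.of_multilinearMap (p k).toMultilinearMap).comp_sub_const x, fun y hy => ?_⟩
  set v := y - x with hv
  let S : Set ℂ := {z | D (x + z • v) = 0}
  have hline : x + (1 : ℂ) • v = y := by simp [hv]
  have hS : S.Finite := hD.finite_setOf_line_eq_zero (z₀ := 0) (by simpa using hx)
  have h0 : (0 : ℂ) ∉ S := by simpa [S] using hx
  have h1 : (1 : ℂ) ∉ S := by simpa only [S, Set.mem_ofPred_eq, hline] using hy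
  have hq : ∀ z ∉ S, DifferentiableAt ℂ (fun z : ℂ => F (x + z • v)) z := fun z hz =>
    (hF _ hz).differentiableAt.comp z (by fun_prop)
  have hqb : ∀ z ∉ S, ‖F (x + z • v)‖ ≤ C * (1 + ‖x‖ + ‖v‖) ^ d * (1 + ‖z‖) ^ d := fun z hz => by
    refine (hb _ hz).trans ?_
    rw [mul_assoc, ← mul_pow]
    gcongr
    calc 1 + ‖x + z • v‖ ≤ 1 + (‖x‖ + ‖z‖ * ‖v‖) := by
          grw [norm_add_le, norm_smul]
      _ ≤ (1 + ‖x‖ + ‖v‖) * (1 + ‖z‖) := by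
          nlinarith [norm_nonneg v, norm_nonneg z, mul_nonneg (norm_nonneg x) (norm_nonneg z)]
  calc ∑ k ∈ Finset.range (d + 1), p k (fun _ => v)
      = ∑ k ∈ Finset.range (d + 1),
          (k.factorial : ℂ)⁻¹ * iteratedDeriv k (fun z : ℂ => F (x + z • v)) 0 * 1 ^ k := by
        refine Finset.sum_congr rfl fun k _ => ?_
        rw [iteratedDeriv_line_of_hasFPowerSeriesAt hp, one_pow, mul_one,
          inv_mul_cancel_left₀ (mod_cast k.factorial_ne_zero)]
    _ = F (x + (1 : ℂ) • v) := (eq_sum_iteratedDeriv_of_norm_le hS h0 hq hqb h1).symm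
    _ = F y := by rw [hline]

end Extension

section PrimeGroup

variable {V : Type*} [AddCommGroup V] [Module ℂ V]

lemma le_primeGroup (G : Subgroup (V ≃ₗ[ℂ] V)) : G ≤ primeGroup G :=
  fun u hu _ _ hf v => hf u hu v

variable (W : Subgroup (V ≃ₗ[ℂ] V)) [Finite W]

lemma exists_mem_apply_eq_of_forall_invariant_eq {x y : V}
    (h : ∀ f : V → ℂ, IsPolyFun f → (∀ w ∈ W, ∀ v, f (w v) = f v) → f x = f y) :
    ∃ w ∈ W, w x = y := by
  have := Fintype.ofFinite W
  have cover : ⋃ w : W, ((LinearMap.ker (Module.Dual.eval ℂ V (w.1 x - y)) :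
      Subspace ℂ (Module.Dual ℂ V)) : Set (Module.Dual ℂ V)) = Set.univ := by
    refine Set.eq_univ_of_forall fun l => ?_
    let f : V → ℂ := fun v => ∏ w : W, (l (w.1 v) - l y)
    have f_poly : IsPolyFun f := .prod fun w _ =>
      ((IsPolyFun.of_linearMap l).comp_linearMap w.1.toLinearMap).sub (.const _)
    have f_inv : ∀ w ∈ W, ∀ v, f (w v) = f v := fun w hw v =>
      Fintype.prod_equiv (Equiv.mulRight ⟨w, hw⟩) _ _ fun _ => rfl
    have f_y : f y = 0 :=
      Finset.prod_eq_zero (Finset.mem_univ (1 : W)) (sub_self (l y))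
    obtain ⟨w, -, hw⟩ := Finset.prod_eq_zero_iff.1 ((h f f_poly f_inv).trans f_y)
    exact Set.mem_iUnion.2 ⟨w, (map_sub l _ _).trans hw⟩
  obtain ⟨w, hw⟩ := Subspace.exists_eq_top_of_iUnion_eq_univ cover
  refine ⟨w, w.2, sub_eq_zero.1 <| (Module.forall_dual_apply_eq_zero_iff ℂ _).1 fun l => ?_⟩
  exact LinearMap.congr_fun (LinearMap.ker_eq_top.1 hw) l

lemma primeGroup_eq_self_of_finite : primeGroup W = W := by
  refine le_antisymm (fun φ hφ => ?_) (le_primeGroup W)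
  have cover : ⋃ w : W, ((LinearMap.eqLocus w.1.toLinearMap φ.toLinearMap :
      Subspace ℂ V) : Set V) = Set.univ := by
    refine Set.eq_univ_of_forall fun v => ?_
    obtain ⟨w, hw, h⟩ := exists_mem_apply_eq_of_forall_invariant_eq W (x := v) (y := φ v)
      fun f hf hinv => (hφ f hf hinv v).symm
    exact Set.mem_iUnion.2 ⟨⟨w, hw⟩, h⟩
  obtain ⟨w, hw⟩ := Subspace.exists_eq_top_of_iUnion_eq_univ cover
  have h : w.1 = φ := LinearEquiv.toLinearMap_injective (LinearMap.eqLocus_eq_top.1 hw)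
  exact h ▸ w.2

end PrimeGroup

section LocalInverse

open scoped ContDiff

variable {𝕜 V : Type*} [RCLike 𝕜] [NormedAddCommGroup V] [NormedSpace 𝕜 V] [CompleteSpace V]

lemma exists_analyticAt_eventually_rightInverse {Φ : V → V} {a : V} {L : V ≃L[𝕜] V}
    (hΦ : AnalyticAt 𝕜 Φ a) (hL : HasFDerivAt Φ (L : V →L[𝕜] V) a) :
    ∃ σ : V → V, AnalyticAt 𝕜 σ (Φ a) ∧ ∀ᶠ y in 𝓝 (Φ a), Φ (σ y) = y := by
  have hc : ContDiffAt 𝕜 ω Φ a := hΦ.contDiffAt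
  have hn : (ω : WithTop ℕ∞) ≠ 0 := by simp
  refine ⟨hc.localInverse hL hn, (hc.to_localInverse hL hn).analyticAt, ?_⟩
  exact (hc.toOpenPartialHomeomorph _ hL hn).eventually_right_inverse'
    (hc.mem_toOpenPartialHomeomorph_source hL hn)

end LocalInverse

section AdjointGroup

open LieAlgebra

lemma pow_finrank_eq_zero_of_isNilpotent {K V : Type*} [Field K] [AddCommGroup V] [Module K V]
    [FiniteDimensional K V] {A : Module.End K V} (hA : IsNilpotent A) :
    A ^ Module.finrank K V = 0 := by
  simpa [(LinearMap.isNilpotent_iff_charpoly A).1 hA] using A.aeval_self_charpoly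

lemma endExp_eq_exp {V : Type*} [AddCommGroup V] [Module ℂ V] [FiniteDimensional ℂ V] [Module ℚ V]
    {A : Module.End ℂ V} (hA : IsNilpotent A) : endExp A = IsNilpotent.exp A := by
  have hA' : A ^ (Module.finrank ℂ V + 1) = 0 :=
    pow_eq_zero_of_le (Nat.le_succ _) (pow_finrank_eq_zero_of_isNilpotent hA)
  rw [IsNilpotent.exp_eq_sum hA', endExp]
  refine Finset.sum_congr rfl fun k _ => LinearMap.ext fun v => ?_
  simp [← Rat.cast_smul_eq_qsmul ℂ]

variable {g : Type*} [LieRing g] [LieAlgebra ℂ g] [FiniteDimensional ℂ g]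

lemma exists_lieEquiv_eq_endExp {x : g} (hx : IsNilpotent (ad ℂ g x)) :
    ∃ e : g ≃ₗ⁅ℂ⁆ g, (e.toLinearEquiv : g →ₗ[ℂ] g) = endExp (ad ℂ g x) := by
  let : Module ℚ g := Module.compHom g (algebraMap ℚ ℂ)
  let : LieAlgebra ℚ g := { lie_smul := fun q y z => lie_smul (q : ℂ) y z }
  have had : (LieDerivation.ad ℂ g x).toLinearMap = ad ℂ g x :=
    LieDerivation.coe_ad_apply_eq_ad_apply x
  exact ⟨(LieDerivation.ad ℂ g x).exp (had ▸ hx),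
    (congrArg IsNilpotent.exp had).trans (endExp_eq_exp hx).symm⟩

lemma exists_mem_adjointGroup_eq_endExp {x : g} (hx : IsNilpotent (ad ℂ g x)) :
    ∃ u ∈ adjointGroup g, ∀ y, u y = endExp (ad ℂ g x) y := by
  obtain ⟨e, he⟩ := exists_lieEquiv_eq_endExp hx
  exact ⟨e.toLinearEquiv, Subgroup.subset_closure ⟨x, hx, he⟩, LinearMap.congr_fun he⟩

variable {u : g ≃ₗ[ℂ] g}

lemma map_lie_of_mem_adjointGroup (hu : u ∈ adjointGroup g) (x y : g) : u ⁅x, y⁆ = ⁅u x, u y⁆ := by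
  induction hu using Subgroup.closure_induction generalizing x y with
  | mem u hu =>
    obtain ⟨z, hz, h⟩ := hu
    obtain ⟨e, he⟩ := exists_lieEquiv_eq_endExp hz
    obtain rfl : u = e.toLinearEquiv := LinearEquiv.toLinearMap_injective (h.trans he.symm)
    exact e.map_lie x y
  | one => rfl
  | mul u v _ _ hu hv => rw [LinearEquiv.mul_apply, hv, hu]; rfl
  | inv u _ hu =>
    refine u.injective ((u.apply_symm_apply _).trans ?_)
    rw [hu]
    exact congrArg₂ _ (u.apply_symm_apply x).symm (u.apply_symm_apply y).symm

lemma conj_ad_of_mem_adjointGroup (hu : u ∈ adjointGroup g) (x : g) :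
    u.conj (ad ℂ g x) = ad ℂ g (u x) :=
  conj_ad_apply { u with map_lie' := map_lie_of_mem_adjointGroup hu _ _ } x

lemma charpoly_ad_of_mem_adjointGroup (hu : u ∈ adjointGroup g) (x : g) :
    (ad ℂ g (u x)).charpoly = (ad ℂ g x).charpoly := by
  rw [← conj_ad_of_mem_adjointGroup hu, LinearEquiv.charpoly_conj]

lemma linearEquivConj_pow {R M : Type*} [CommRing R] [AddCommGroup M] [Module R M] (e : M ≃ₗ[R] M)
    (A : Module.End R M) (n : ℕ) : e.conj A ^ n = e.conj (A ^ n) :=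
  (map_pow e.conjRingEquiv A n).symm

lemma trace_ad_pow_of_mem_adjointGroup (hu : u ∈ adjointGroup g) (x : g) (n : ℕ) :
    LinearMap.trace ℂ g (ad ℂ g (u x) ^ n) = LinearMap.trace ℂ g (ad ℂ g x ^ n) := by
  rw [← conj_ad_of_mem_adjointGroup hu, linearEquivConj_pow, LinearMap.trace_conj']

lemma mem_engel_iff_of_mem_adjointGroup (hu : u ∈ adjointGroup g) (x y : g) :
    u y ∈ LieSubalgebra.engel ℂ (u x) ↔ y ∈ LieSubalgebra.engel ℂ x := by
  simp only [LieSubalgebra.mem_engel_iff, ← conj_ad_of_mem_adjointGroup hu, linearEquivConj_pow,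
    LinearEquiv.conj_apply_apply, u.symm_apply_apply, map_eq_zero_iff u u.injective]

end AdjointGroup

section Regular

open LieAlgebra

lemma isCartanSubalgebra_engel_of_isRegular {K L : Type*} [Field K] [Infinite K] [LieRing L]
    [LieAlgebra K L] [FiniteDimensional K L] {x : L} (hx : IsRegular K x) :
    (LieSubalgebra.engel K x).IsCartanSubalgebra := by
  refine ⟨LieSubalgebra.isNilpotent_of_forall_le_engel _ fun y hy => ?_,
    LieSubalgebra.normalizer_engel K x⟩
  let E : {LieSubalgebra.engel K z | z ∈ LieSubalgebra.engel K x} :=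
    ⟨LieSubalgebra.engel K x, x, LieSubalgebra.self_mem_engel K x, rfl⟩
  suffices IsBot E from this ⟨LieSubalgebra.engel K y, y, hy, rfl⟩
  have hcard : (Module.finrank K L : Cardinal) ≤ Cardinal.mk K :=
    Cardinal.natCast_le_aleph0.trans (Cardinal.infinite_iff.1 inferInstance)
  refine engel_isBot_of_isMin hcard (LieSubalgebra.engel K x) E le_rfl ?_
  rintro ⟨_, z, hz, rfl⟩ hzx
  have hfinrank : Module.finrank K (LieSubalgebra.engel K x) ≤
      Module.finrank K (LieSubalgebra.engel K z) :=
    ((isRegular_iff_finrank_engel_eq_rank K x).1 hx).trans_le (rank_le_finrank_engel K z)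
  exact (LieSubalgebra.toSubmodule_injective
    (Submodule.eq_of_le_of_finrank_le hzx hfinrank)).ge

end Regular

section RootSpaces

open LieAlgebra LieModule Polynomial

section Abelian

variable {K L : Type*} [CommRing K] [LieRing L] [LieAlgebra K L] {H : LieSubalgebra K L}
  [IsLieAbelian H]

lemma lie_eq_zero_of_mem {x y : L} (hx : x ∈ H) (hy : y ∈ H) : ⁅x, y⁆ = 0 :=
  congrArg Subtype.val (trivial_lie_zero H H ⟨x, hx⟩ ⟨y, hy⟩)

lemma le_engel_of_mem {x : L} (hx : x ∈ H) : H ≤ LieSubalgebra.engel K x := fun y hy =>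
  (LieSubalgebra.mem_engel_iff K x y).2 ⟨1, by simpa using lie_eq_zero_of_mem hx hy⟩

end Abelian

variable {K L : Type*} [Field K] [LieRing L] [LieAlgebra K L]
  {H : LieSubalgebra K L} [H.IsCartanSubalgebra]

lemma exists_weight_eq_of_lie_eq_smul {a : H → K} {v : L} (hv : v ≠ 0)
    (ha : ∀ h : H, ⁅(h : L), v⁆ = a h • v) : ∃ α : Weight K H L, ⇑α = a := by
  have hmem : v ∈ rootSpace H a :=
    weightSpace_le_genWeightSpace L a ((mem_weightSpace a v).2 ha)
  exact ⟨⟨a, fun hbot => hv (by simpa [hbot] using hmem)⟩, rfl⟩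

variable [FiniteDimensional K L]

lemma mem_of_mem_rootSpace_of_isZero {α : Weight K H L} (hα : α.IsZero) {y : L}
    (hy : y ∈ rootSpace H α) : y ∈ H := by
  rw [hα.eq, rootSpace_zero_eq] at hy
  simpa using hy

variable [IsTriangularizable K H L]

open scoped Classical in
lemma isInternal_rootSpace :
    DirectSum.IsInternal fun α : Weight K H L => (rootSpace H α).toSubmodule := by
  refine (DirectSum.isInternal_submodule_iff_iSupIndep_and_iSup_eq_top _).2
    ⟨LieSubmodule.iSupIndep_toSubmodule.2 (iSupIndep_genWeightSpace' K H L), ?_⟩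
  rw [← LieSubmodule.iSup_toSubmodule, iSup_genWeightSpace_eq_top', LieSubmodule.top_toSubmodule]

open scoped Classical in
/-- The decomposition of `L` as the direct sum of its root spaces, the Cartan subalgebra being the
root space of the zero weight. -/
def rootSpaceEquiv (H : LieSubalgebra K L) [H.IsCartanSubalgebra] [IsTriangularizable K H L] :
    (DirectSum (Weight K H L) fun α => (rootSpace H α).toSubmodule) ≃ₗ[K] L :=
  LinearEquiv.ofBijective (DirectSum.coeLinearMap _) isInternal_rootSpace

/-- The projection of `L` onto the root space of `α` along the other root spaces. -/
def rootProj (α : Weight K H L) : Module.End K L :=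
  (rootSpace H α).toSubmodule.subtype ∘ₗ DirectSum.component K _ _ α ∘ₗ
    (rootSpaceEquiv H).symm.toLinearMap

lemma rootProj_mem (α : Weight K H L) (y : L) : rootProj α y ∈ rootSpace H α :=
  ((rootSpaceEquiv H).symm y α).2

lemma sum_rootProj (H : LieSubalgebra K L) [H.IsCartanSubalgebra] [IsTriangularizable K H L]
    (y : L) : ∑ α : Weight K H L, rootProj α y = y := by
  classical
  trans rootSpaceEquiv H ((rootSpaceEquiv H).symm y)
  · exact ((DirectSum.coeLinearMap_eq_dfinsuppSum _ _).trans
      (DFinsupp.sum_eq_sum_fintype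
        (f := fun (α : Weight K H L) (z : (rootSpace H α).toSubmodule) => (z : L))
        _ fun _ => rfl)).symm
  · exact (rootSpaceEquiv H).apply_symm_apply y

variable [CharZero K] [IsKilling K L]

lemma aeval_ad_apply (h : H) (q : K[X]) (y : L) :
    aeval (ad K L (h : L)) q y = ∑ α : Weight K H L, q.eval (α h) • rootProj α y := by
  conv_lhs => rw [← sum_rootProj H y, map_sum]
  refine Finset.sum_congr rfl fun α _ => ?_
  exact Module.End.aeval_apply_of_mem_apply_eq_smul
    (IsKilling.lie_eq_smul_of_mem_rootSpace (rootProj_mem α y) h)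

lemma lie_eq_sum_smul_rootProj (h : H) (y : L) :
    ⁅(h : L), y⁆ = ∑ α : Weight K H L, α h • rootProj α y := by
  simpa using aeval_ad_apply h X y

lemma engel_eq_iff_forall_weight_ne_zero {x : L} (hx : x ∈ H) :
    LieSubalgebra.engel K x = H ↔
      ∀ α : Weight K H L, α.IsNonZero → α ⟨x, hx⟩ ≠ 0 := by
  classical
  constructor
  · intro hengel α hα hαx
    obtain ⟨v, hv, hv0⟩ := α.exists_ne_zero
    have hlie (h : H) : ⁅(h : L), v⁆ = α h • v := IsKilling.lie_eq_smul_of_mem_rootSpace hv h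
    have hvH : v ∈ H := by
      rw [← hengel, LieSubalgebra.mem_engel_iff]
      exact ⟨1, by simpa [hαx] using hlie ⟨x, hx⟩⟩
    refine hα (funext fun h => (smul_eq_zero.1 ?_).resolve_right hv0)
    rw [← hlie, lie_eq_zero_of_mem h.2 hvH]
  · refine fun hne => (le_engel_of_mem hx).antisymm' fun y hy => ?_
    obtain ⟨n, hn⟩ := (LieSubalgebra.mem_engel_iff K x y).1 hy
    have hsum : ∑ α : Weight K H L, α ⟨x, hx⟩ ^ n • rootProj α y = 0 := by
      simpa [hn] using (aeval_ad_apply ⟨x, hx⟩ (X ^ n) y).symm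
    have hzero (α : Weight K H L) : α ⟨x, hx⟩ ^ n • rootProj α y = 0 :=
      (iSupIndep_iff_finsetSum_eq_zero_imp_eq_zero _).1 isInternal_rootSpace.submodule_iSupIndep
        Finset.univ _ (fun α _ => Submodule.smul_mem _ _ (rootProj_mem α y)) hsum α
        (Finset.mem_univ α)
    rw [← sum_rootProj H y]
    refine sum_mem fun α _ => ?_
    by_cases hα : α.IsZero
    · exact mem_of_mem_rootSpace_of_isZero hα (rootProj_mem α y)
    · rw [(smul_eq_zero.1 (hzero α)).resolve_left (pow_ne_zero n (hne α hα))]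
      exact zero_mem H

lemma exists_engel_eq_and_injective_weight (H : LieSubalgebra K L) [H.IsCartanSubalgebra]
    [IsTriangularizable K H L] :
    ∃ x : H, LieSubalgebra.engel K (x : L) = H ∧
      Function.Injective fun α : Weight K H L => α x := by
  let f : {p : Weight K H L × Weight K H L // p.1 ≠ p.2} ⊕ {α : Weight K H L // α.IsNonZero} →
      Module.Dual K H :=
    Sum.elim (fun p => p.1.1.toLinear - p.1.2.toLinear) (fun α => α.1.toLinear)
  obtain ⟨x, hx⟩ := Module.Dual.exists_forall_ne_zero_of_forall_exists f (by
    rintro (⟨⟨α, β⟩, hαβ⟩ | ⟨α, hα⟩) <;> by_contra! hf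
    · exact hαβ (DFunLike.ext _ _ fun h => sub_eq_zero.1 (hf h))
    · exact hα (funext hf))
  refine ⟨x, (engel_eq_iff_forall_weight_ne_zero x.2).2 fun α hα => hx (.inr ⟨α, hα⟩), ?_⟩
  intro α β hαβ
  by_contra hne
  exact hx (.inl ⟨(α, β), hne⟩) (sub_eq_zero.2 hαβ)

lemma exists_aeval_ad_eq {x : H} (hx : Function.Injective fun α : Weight K H L => α x) (h : H) :
    ∃ q : K[X], aeval (ad K L (x : L)) q = ad K L (h : L) := by
  classical
  refine ⟨Lagrange.interpolate Finset.univ (fun α : Weight K H L => α x) fun α => α h,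
    LinearMap.ext fun y => ?_⟩
  rw [aeval_ad_apply, ad_apply, lie_eq_sum_smul_rootProj]
  refine Finset.sum_congr rfl fun α hα => ?_
  rw [Lagrange.eval_interpolate_at_node _ hx.injOn hα]

lemma eq_of_forall_weight_eq {h k : H} (hhk : ∀ α : Weight K H L, α h = α k) : h = k := by
  have hmem : h - k ∈ ⨅ α : Weight K H L, α.ker :=
    (Submodule.mem_iInf _).2 fun α => by
      simpa [sub_eq_zero] using hhk α
  rw [IsKilling.iInf_ker_weight_eq_bot] at hmem
  exact sub_eq_zero.1 ((Submodule.mem_bot K).1 hmem)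

-- `p` projects onto `H` and `-e α` inverts `ad x` on the root space of `α`.
lemma exists_sub_ad_comp_sum_eq_id {x : L} (hx : LieSubalgebra.engel K x = H) :
    ∃ (s : Finset (Weight K H L)) (p : Module.End K L) (e : Weight K H L → Module.End K L),
      (∀ v, p v ∈ H) ∧ (∀ α ∈ s, ∀ v, IsNilpotent (ad K L (e α v))) ∧
      p - ad K L x ∘ₗ ∑ α ∈ s, e α = LinearMap.id := by
  classical
  have hxH : x ∈ H := hx ▸ LieSubalgebra.self_mem_engel K x
  have hne := (engel_eq_iff_forall_weight_ne_zero hxH).1 hx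
  let s : Finset (Weight K H L) := {α | α.IsNonZero}
  let e (α : Weight K H L) : Module.End K L := -(α ⟨x, hxH⟩)⁻¹ • rootProj α
  have had : ∀ α ∈ s, ad K L x ∘ₗ e α = -rootProj α := fun α hα => by
    ext v
    have hlie : ⁅x, rootProj α v⁆ = α ⟨x, hxH⟩ • rootProj α v :=
      IsKilling.lie_eq_smul_of_mem_rootSpace (rootProj_mem α v) ⟨x, hxH⟩
    simp [e, hlie, smul_smul, inv_mul_cancel₀ (hne α (Finset.mem_filter.1 hα).2)]
  have hsum : ad K L x ∘ₗ ∑ α ∈ s, e α = ∑ α ∈ s, ad K L x ∘ₗ e α :=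
    Finset.mul_sum s e (ad K L x)
  refine ⟨s, ∑ α ∈ sᶜ, rootProj α, e, fun v => ?_, fun α hα v => ?_, ?_⟩
  · rw [LinearMap.sum_apply]
    exact sum_mem fun α hα =>
      mem_of_mem_rootSpace_of_isZero (by simpa [s] using hα) (rootProj_mem α v)
  · exact isNilpotent_ad_of_mem_rootSpace H (Finset.mem_filter.1 hα).2
      (Submodule.smul_mem _ _ (rootProj_mem α v))
  · rw [hsum, Finset.sum_congr rfl had, Finset.sum_neg_distrib, sub_neg_eq_add,
      Finset.sum_compl_add_sum]
    exact LinearMap.ext fun v => (LinearMap.sum_apply _ _ v).trans (sum_rootProj H v)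

end RootSpaces

section ExpApply

variable {𝕜 V : Type*} [RCLike 𝕜] [NormedAddCommGroup V] [NormedSpace 𝕜 V] [CompleteSpace V]
  {A : V →L[𝕜] V →L[𝕜] V} {G : V → V}

lemma analyticAt_exp_apply (hG : AnalyticAt 𝕜 G 0) :
    AnalyticAt 𝕜 (fun v => NormedSpace.exp (A v) (G v)) 0 := by
  have hexp : AnalyticAt 𝕜 (fun v => NormedSpace.exp (A v)) 0 :=
    (NormedSpace.exp_analytic (𝕂 := 𝕜) (A 0)).comp (A.analyticAt 0)
  exact ((ContinuousLinearMap.id 𝕜 (V →L[𝕜] V)).analyticAt_bilinear _).comp (hexp.prod hG)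

lemma hasFDerivAt_exp_apply {G' : V →L[𝕜] V} (hG : HasFDerivAt G G' 0) :
    HasFDerivAt (fun v => NormedSpace.exp (A v) (G v)) (G' + A.flip (G 0)) 0 := by
  have hexp : HasFDerivAt (fun v => NormedSpace.exp (A v)) A 0 := by
    have h0 : HasFDerivAt NormedSpace.exp (1 : (V →L[𝕜] V) →L[𝕜] V →L[𝕜] V) (A 0) := by
      rw [map_zero]
      exact hasFDerivAt_exp_zero
    exact h0.comp 0 A.hasFDerivAt
  convert hexp.clm_apply hG using 1
  ext v
  simp

end ExpApply

lemma exp_toContinuousLinearMap_apply {V : Type*} [NormedAddCommGroup V] [NormedSpace ℂ V]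
    [FiniteDimensional ℂ V] {A : Module.End ℂ V} (hA : IsNilpotent A) (v : V) :
    NormedSpace.exp (LinearMap.toContinuousLinearMap A) v = endExp A v := by
  have hpow (n : ℕ) (w : V) : (LinearMap.toContinuousLinearMap A ^ n) w = (A ^ n) w := by
    induction n generalizing w with
    | zero => rfl
    | succ n ih => rw [pow_succ, pow_succ]; exact ih _
  have hzero : ∀ n ∉ Finset.range (Module.finrank ℂ V + 1),
      (n.factorial : ℂ)⁻¹ • LinearMap.toContinuousLinearMap A ^ n = 0 := fun n hn => by
    have hle : Module.finrank ℂ V ≤ n := by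
      rw [Finset.mem_range] at hn
      lia
    ext w
    simp [hpow, pow_eq_zero_of_le hle (pow_finrank_eq_zero_of_isNilpotent hA)]
  rw [congrFun (NormedSpace.exp_eq_tsum ℂ) _, tsum_eq_sum hzero, endExp]
  simp [hpow]

section Chart

open LieAlgebra LieModule

variable {g : Type*} [LieRing g] [LieAlgebra ℂ g] [FiniteDimensional ℂ g]

/-- The norm transported to a finite-dimensional complex Lie algebra from the coordinates in some
basis; it makes the analytic notions available on `g`. -/
abbrev coordinateNorm (g : Type*) [LieRing g] [LieAlgebra ℂ g] [FiniteDimensional ℂ g] :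
    NormedAddCommGroup g :=
  NormedAddCommGroup.induced g (Fin (Module.finrank ℂ g) → ℂ) (Module.finBasis ℂ g).equivFun
    (Module.finBasis ℂ g).equivFun.injective

attribute [local instance] coordinateNorm

/-- The normed space structure that goes with `coordinateNorm`. Both are only used as local
instances. -/
abbrev coordinateNormedSpace (g : Type*) [LieRing g] [LieAlgebra ℂ g] [FiniteDimensional ℂ g] :
    NormedSpace ℂ g :=
  NormedSpace.induced ℂ g (Fin (Module.finrank ℂ g) → ℂ) (Module.finBasis ℂ g).equivFun

attribute [local instance] coordinateNormedSpace

-- `Φ v` is the image of `h + p v` under the product of the `exp (ad (e i v))`, taken in some order.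
lemma exists_analyticAt_conj {ι : Type*} (s : Finset ι) (h : g) (p : g →ₗ[ℂ] g)
    (e : ι → g →ₗ[ℂ] g) (he : ∀ i ∈ s, ∀ v, IsNilpotent (ad ℂ g (e i v))) :
    ∃ Φ : g → g, AnalyticAt ℂ Φ 0 ∧ Φ 0 = h ∧
      HasFDerivAt Φ (LinearMap.toContinuousLinearMap (p - ad ℂ g h ∘ₗ ∑ i ∈ s, e i)) 0 ∧
      ∀ v, ∃ u ∈ adjointGroup g, u (h + p v) = Φ v := by
  classical
  induction s using Finset.induction_on with
  | empty =>
    refine ⟨fun v => h + p.toContinuousLinearMap v,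
      analyticAt_const.add (p.toContinuousLinearMap.analyticAt 0), by simp, ?_,
      fun v => ⟨1, one_mem _, rfl⟩⟩
    simpa using p.toContinuousLinearMap.hasFDerivAt.const_add h
  | insert i s his ih =>
    obtain ⟨Φ, hΦ, hΦ0, hΦ', hu⟩ := ih fun j hj => he j (Finset.mem_insert_of_mem hj)
    let A : g →L[ℂ] g →L[ℂ] g := LinearMap.toContinuousLinearMap
      (LinearMap.toContinuousLinearMap.toLinearMap ∘ₗ (ad ℂ g : g →ₗ[ℂ] Module.End ℂ g) ∘ₗ e i)
    refine ⟨fun v => NormedSpace.exp (A v) (Φ v), analyticAt_exp_apply hΦ, by simp [hΦ0], ?_,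
      fun v => ?_⟩
    · refine (hasFDerivAt_exp_apply (A := A) hΦ').congr_fderiv (ContinuousLinearMap.ext fun v => ?_)
      change p v - ⁅h, (∑ j ∈ s, e j) v⁆ + ⁅e i v, Φ 0⁆ = p v - ⁅h, (∑ j ∈ insert i s, e j) v⁆
      rw [Finset.sum_insert his, LinearMap.add_apply, lie_add, hΦ0, ← lie_skew (e i v) h]
      abel
    · obtain ⟨u, hu, huv⟩ := hu v
      have hnil := he i (Finset.mem_insert_self i s) v
      obtain ⟨w, hw, hwy⟩ := exists_mem_adjointGroup_eq_endExp hnil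
      refine ⟨w * u, mul_mem hw hu, ?_⟩
      rw [LinearEquiv.mul_apply, huv, hwy]
      exact (exp_toContinuousLinearMap_apply hnil _).symm

variable [IsKilling ℂ g] {t : LieSubalgebra ℂ g} [t.IsCartanSubalgebra]

lemma exists_analyticAt_eventually_conj {x : g} (hx : LieSubalgebra.engel ℂ x = t) :
    ∃ π : g → g, AnalyticAt ℂ π x ∧ (∀ y, π y ∈ t) ∧
      ∀ᶠ y in 𝓝 x, ∃ u ∈ adjointGroup g, u (π y) = y := by
  have hxt : x ∈ t := hx ▸ LieSubalgebra.self_mem_engel ℂ x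
  obtain ⟨s, p, e, hp, he, hid⟩ := exists_sub_ad_comp_sum_eq_id hx
  obtain ⟨Φ, hΦ, hΦ0, hΦ', hu⟩ := exists_analyticAt_conj s x p e he
  rw [hid] at hΦ'
  obtain ⟨σ, hσ, hΦσ⟩ :=
    exists_analyticAt_eventually_rightInverse (L := ContinuousLinearEquiv.refl ℂ g) hΦ hΦ'
  rw [hΦ0] at hσ hΦσ
  let pc : g →L[ℂ] g := LinearMap.toContinuousLinearMap p
  refine ⟨fun y => x + pc (σ y), analyticAt_const.add ((pc.analyticAt _).comp hσ),
    fun y => add_mem hxt (hp _), ?_⟩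
  filter_upwards [hΦσ] with y hy
  obtain ⟨u, huA, huy⟩ := hu (σ y)
  exact ⟨u, huA, huy.trans hy⟩

end Chart

section Conjugacy

open LieAlgebra

variable {g : Type*} [LieRing g] [LieAlgebra ℂ g] [FiniteDimensional ℂ g]

variable (g) in
lemma isPolyFun_charpoly_ad_coeff (n : ℕ) :
    IsPolyFun fun y : g => (ad ℂ g y).charpoly.coeff n :=
  IsPolyFun.charpoly_coeff (ad ℂ g : g →ₗ[ℂ] Module.End ℂ g) n

section Normed

attribute [local instance] coordinateNorm coordinateNormedSpace

lemma isOpen_setOf_isRegular : IsOpen {y : g | IsRegular ℂ y} := by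
  simp only [isRegular_def]
  exact isOpen_ne_fun (isPolyFun_charpoly_ad_coeff g (rank ℂ g)).continuous continuous_const

lemma dense_setOf_isRegular : Dense {y : g | IsRegular ℂ y} := by
  obtain ⟨x, hx⟩ := exists_isRegular ℂ g
  simp only [isRegular_def] at hx ⊢
  exact (isPolyFun_charpoly_ad_coeff g (rank ℂ g)).dense_setOf_ne_zero hx

lemma isPreconnected_setOf_isRegular : IsPreconnected {y : g | IsRegular ℂ y} := by
  simp only [isRegular_def]
  exact (isPolyFun_charpoly_ad_coeff g (rank ℂ g)).isPreconnected_setOf_ne_zero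

end Normed

variable {u : g ≃ₗ[ℂ] g}

lemma isRegular_iff_of_mem_adjointGroup (hu : u ∈ adjointGroup g) (x : g) :
    IsRegular ℂ (u x) ↔ IsRegular ℂ x := by
  rw [isRegular_def, isRegular_def, charpoly_ad_of_mem_adjointGroup hu]

lemma engel_eq_engel_of_mem_adjointGroup (hu : u ∈ adjointGroup g) {x y : g}
    (h : LieSubalgebra.engel ℂ x = LieSubalgebra.engel ℂ y) :
    LieSubalgebra.engel ℂ (u x) = LieSubalgebra.engel ℂ (u y) := by
  ext z
  rw [← u.apply_symm_apply z, mem_engel_iff_of_mem_adjointGroup hu,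
    mem_engel_iff_of_mem_adjointGroup hu, h]

variable [IsKilling ℂ g]

section Normed

attribute [local instance] coordinateNorm coordinateNormedSpace

lemma finrank_cartan_eq_rank (t : LieSubalgebra ℂ g) [t.IsCartanSubalgebra] :
    Module.finrank ℂ t = rank ℂ g := by
  obtain ⟨x, hx, -⟩ := exists_engel_eq_and_injective_weight t
  obtain ⟨π, -, hπt, hπ⟩ := exists_analyticAt_eventually_conj hx
  obtain ⟨y, hy, u, hu, huy⟩ := dense_setOf_isRegular.inter_nhds_nonempty hπ
  have hreg : IsRegular ℂ (π y) := by
    rw [← isRegular_iff_of_mem_adjointGroup hu, huy]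
    exact hy
  refine le_antisymm ?_ ?_
  · exact ((isRegular_iff_finrank_engel_eq_rank ℂ _).1 hreg) ▸
      Submodule.finrank_mono (le_engel_of_mem (hπt y))
  · exact hx ▸ rank_le_finrank_engel ℂ (x : g)

end Normed

variable {t : LieSubalgebra ℂ g} [t.IsCartanSubalgebra]

lemma engel_eq_iff_isRegular {x : g} (hx : x ∈ t) :
    LieSubalgebra.engel ℂ x = t ↔ IsRegular ℂ x := by
  rw [isRegular_iff_finrank_engel_eq_rank, ← finrank_cartan_eq_rank t]
  refine ⟨fun h => by rw [h], fun h => ?_⟩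
  exact LieSubalgebra.toSubmodule_injective
    (Submodule.eq_of_le_of_finrank_le (le_engel_of_mem hx) h.le).symm

variable (t) in
lemma exists_mem_adjointGroup_engel_eq {y : g} (hy : IsRegular ℂ y) :
    ∃ u ∈ adjointGroup g, LieSubalgebra.engel ℂ (u y) = t := by
  let : NormedAddCommGroup g := coordinateNorm g
  let : NormedSpace ℂ g := coordinateNormedSpace g
  let r (a b : g) : Prop :=
    ∃ u ∈ adjointGroup g, LieSubalgebra.engel ℂ (u a) = LieSubalgebra.engel ℂ b
  have r_symm (a b : g) : r a b → r b a := by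
    rintro ⟨u, hu, hab⟩
    refine ⟨u⁻¹, inv_mem hu, ?_⟩
    have := engel_eq_engel_of_mem_adjointGroup (inv_mem hu) hab.symm
    simpa [← LinearEquiv.mul_apply] using this
  have r_trans (a b c : g) : r a b → r b c → r a c := by
    rintro ⟨u, hu, hab⟩ ⟨v, hv, hbc⟩
    exact ⟨v * u, mul_mem hv hu, (engel_eq_engel_of_mem_adjointGroup hv hab).trans hbc⟩
  have r_near (a : g) (ha : IsRegular ℂ a) : ∀ᶠ b in 𝓝[{b | IsRegular ℂ b}] a, r a b := by
    have := isCartanSubalgebra_engel_of_isRegular ha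
    obtain ⟨π, -, hπa, hπ⟩ := exists_analyticAt_eventually_conj (x := a) rfl
    filter_upwards [nhdsWithin_le_nhds hπ, self_mem_nhdsWithin] with b ⟨u, hu, hub⟩ hb
    have hreg : IsRegular ℂ (π b) := by
      rw [← isRegular_iff_of_mem_adjointGroup hu, hub]
      exact hb
    refine ⟨u, hu, ?_⟩
    rw [← engel_eq_engel_of_mem_adjointGroup hu ((engel_eq_iff_isRegular (hπa b)).2 hreg), hub]
  obtain ⟨x, hx, -⟩ := exists_engel_eq_and_injective_weight t
  obtain ⟨u, hu, huy⟩ := isPreconnected_setOf_isRegular.induction₂ r (fun a ha => r_near a ha)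
    (fun a b c _ _ _ => r_trans a b c) (fun a b _ _ => r_symm a b) hy
    ((engel_eq_iff_isRegular x.2).1 hx)
  exact ⟨u, hu, huy.trans hx⟩

end Conjugacy

section WeylGroup

open LieAlgebra LieModule

variable {g : Type*} [LieRing g] [LieAlgebra ℂ g] [FiniteDimensional ℂ g]

/-- The Weyl group of `t`, realised as the group of all linear automorphisms of `t` induced by
elements of the adjoint group that stabilise `t`. -/
def weylGroup (t : LieSubalgebra ℂ g) : Subgroup (t ≃ₗ[ℂ] t) where
  carrier := {w | ∃ u ∈ adjointGroup g, ∀ h : t, u h = w h}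
  one_mem' := ⟨1, one_mem _, fun _ => rfl⟩
  mul_mem' := by
    rintro w w' ⟨u, hu, huw⟩ ⟨u', hu', huw'⟩
    exact ⟨u * u', mul_mem hu hu', fun h => by
      rw [LinearEquiv.mul_apply, huw', huw, LinearEquiv.mul_apply]⟩
  inv_mem' := by
    rintro w ⟨u, hu, huw⟩
    refine ⟨u⁻¹, inv_mem hu, fun h => (LinearEquiv.symm_apply_eq u).2 ?_⟩
    rw [huw]
    exact congrArg Subtype.val (w.apply_symm_apply h).symm

variable {t : LieSubalgebra ℂ g}

lemma exists_mem_weylGroup_forall_apply_eq {u : g ≃ₗ[ℂ] g} (hu : u ∈ adjointGroup g) {x : g}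
    (hx : LieSubalgebra.engel ℂ x = t) (hux : LieSubalgebra.engel ℂ (u x) = t) :
    ∃ w ∈ weylGroup t, ∀ h : t, u h = w h := by
  have hmaps : ∀ y ∈ t.toSubmodule, u y ∈ t.toSubmodule := fun y hy => by
    change u y ∈ t
    rw [← hux, mem_engel_iff_of_mem_adjointGroup hu, hx]
    exact hy
  have hinj : Function.Injective (u.toLinearMap.restrict hmaps) := fun a b hab =>
    Subtype.ext (u.injective (congrArg Subtype.val hab))
  exact ⟨LinearEquiv.ofInjectiveEndo _ hinj, ⟨u, hu, fun _ => rfl⟩, fun _ => rfl⟩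

variable [IsKilling ℂ g] [t.IsCartanSubalgebra]

instance finite_weylGroup : Finite (weylGroup t) := by
  have hweight (w : weylGroup t) (α : Weight ℂ t g) :
      ∃ β : Weight ℂ t g, ⇑β = fun h => α (w.1 h) := by
    obtain ⟨u, hu, huw⟩ := w.2
    obtain ⟨v, hv, hv0⟩ := α.exists_ne_zero
    refine exists_weight_eq_of_lie_eq_smul (v := u.symm v) (by simpa using hv0) fun h => ?_
    refine u.injective ?_
    rw [map_lie_of_mem_adjointGroup hu, map_smul, u.apply_symm_apply, huw]
    exact IsKilling.lie_eq_smul_of_mem_rootSpace hv (w.1 h)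
  choose f hf using hweight
  refine Finite.of_injective f fun w w' hww' => ?_
  refine Subtype.ext (LinearEquiv.ext fun h => eq_of_forall_weight_eq fun α => ?_)
  have hα := congrFun (hf w α) h
  rw [hww', hf w' α] at hα
  exact hα.symm

lemma exists_mem_weylGroup_apply_eq {u : g ≃ₗ[ℂ] g} (hu : u ∈ adjointGroup g) {h k : t}
    (hh : IsRegular ℂ (h : g)) (huh : u h = k) : ∃ w ∈ weylGroup t, w h = k := by
  have hk : LieSubalgebra.engel ℂ (k : g) = t := by
    rw [engel_eq_iff_isRegular k.2, ← huh, isRegular_iff_of_mem_adjointGroup hu]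
    exact hh
  obtain ⟨w, hw, huw⟩ := exists_mem_weylGroup_forall_apply_eq hu
    ((engel_eq_iff_isRegular h.2).2 hh) (huh ▸ hk)
  exact ⟨w, hw, Subtype.ext ((huw h).symm.trans huh)⟩

variable (t) in
lemma exists_mem_adjointGroup_apply_eq {y : g} (hy : IsRegular ℂ y) :
    ∃ u ∈ adjointGroup g, ∃ h : t, IsRegular ℂ (h : g) ∧ u h = y := by
  obtain ⟨u, hu, huy⟩ := exists_mem_adjointGroup_engel_eq t hy
  refine ⟨u⁻¹, inv_mem hu, ⟨u y, huy ▸ LieSubalgebra.self_mem_engel ℂ (u y)⟩, ?_,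
    u.symm_apply_apply y⟩
  exact (isRegular_iff_of_mem_adjointGroup hu y).2 hy

end WeylGroup

section ChevalleyRestriction

open LieAlgebra
open LieModule (Weight)

variable {g : Type*} [LieRing g] [LieAlgebra ℂ g] [FiniteDimensional ℂ g] [IsKilling ℂ g]
  {t : LieSubalgebra ℂ g} [t.IsCartanSubalgebra] {P : t → ℂ}

lemma exists_apply_eq_of_weylGroup_invariant
    (hinv : ∀ w ∈ weylGroup t, ∀ h, P (w h) = P h) :
    ∃ F : g → ℂ, ∀ u ∈ adjointGroup g, ∀ h : t, IsRegular ℂ (h : g) → F (u h) = P h := by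
  let orbit (p : adjointGroup g × {h : t // IsRegular ℂ (h : g)}) : g := p.1.1 p.2.1
  let value (p : adjointGroup g × {h : t // IsRegular ℂ (h : g)}) : ℂ := P p.2.1
  have well_defined : value.FactorsThrough orbit := by
    rintro ⟨⟨u, hu⟩, ⟨h, hh⟩⟩ ⟨⟨v, hv⟩, ⟨k, hk⟩⟩ (huv : u h = v k)
    obtain ⟨w, hw, hwh⟩ := exists_mem_weylGroup_apply_eq (mul_mem (inv_mem hv) hu) hh
      ((LinearEquiv.symm_apply_eq v).2 huv)
    exact (hinv w hw h).symm.trans (congrArg P hwh)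
  exact ⟨Function.extend orbit value 0, fun u hu h hh =>
    well_defined.extend_apply 0 (⟨u, hu⟩, ⟨h, hh⟩)⟩

attribute [local instance] coordinateNorm coordinateNormedSpace

variable {F : g → ℂ}

lemma analyticAt_of_apply_eq (hP : IsPolyFun P)
    (hF : ∀ u ∈ adjointGroup g, ∀ h : t, IsRegular ℂ (h : g) → F (u h) = P h) {y : g}
    (hy : IsRegular ℂ y) : AnalyticAt ℂ F y := by
  obtain ⟨u, hu, h, hh, huh⟩ := exists_mem_adjointGroup_apply_eq t hy
  obtain ⟨π, hπ, hπt, hπu⟩ :=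
    exists_analyticAt_eventually_conj ((engel_eq_iff_isRegular h.2).2 hh)
  obtain ⟨pr, hpr⟩ : ∃ pr : g →ₗ[ℂ] t, ∀ k : t, pr k = k :=
    (LinearMap.exists_leftInverse_of_injective t.toSubmodule.subtype
      (Submodule.ker_subtype _)).imp fun _ => LinearMap.congr_fun
  let uinv : g →L[ℂ] g := LinearMap.toContinuousLinearMap (u.symm : g →ₗ[ℂ] g)
  have huy : uinv y = h := (LinearEquiv.symm_apply_eq u).2 huh.symm
  rw [← huy] at hπ hπu
  have hG : AnalyticAt ℂ (fun z => P (pr (π (uinv z)))) y :=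
    ((hP.comp_linearMap pr).analyticAt _).comp (hπ.comp (uinv.analyticAt y))
  refine hG.congr ?_
  filter_upwards [uinv.continuous.continuousAt.eventually hπu,
    isOpen_setOf_isRegular.mem_nhds hy] with z ⟨v, hv, hvz⟩ hz
  let k : t := ⟨π (uinv z), hπt _⟩
  have huvk : (u * v) k = z := (congrArg u hvz).trans (u.apply_symm_apply z)
  have hk : IsRegular ℂ (k : g) := by
    rw [← isRegular_iff_of_mem_adjointGroup (mul_mem hu hv), huvk]
    exact hz
  change P (pr (π (uinv z))) = F z
  rw [hpr k, ← hF _ (mul_mem hu hv) k hk, huvk]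

lemma exists_norm_lie_le (g : Type*) [LieRing g] [LieAlgebra ℂ g] [FiniteDimensional ℂ g] :
    ∃ C : ℝ, ∀ x y : g, ‖⁅x, y⁆‖ ≤ C * ‖x‖ * ‖y‖ :=
  let A : g →L[ℂ] g →L[ℂ] g := LinearMap.toContinuousLinearMap
    (LinearMap.toContinuousLinearMap.toLinearMap ∘ₗ (ad ℂ g : g →ₗ[ℂ] Module.End ℂ g))
  ⟨‖A‖, A.le_opNorm₂⟩

-- The weights of `h` are eigenvalues of `ad (u h)`, hence bounded by its norm.
variable (t) in
lemma exists_norm_le_of_mem_adjointGroup :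
    ∃ C : ℝ, 0 ≤ C ∧ ∀ u ∈ adjointGroup g, ∀ h : t, ‖h‖ ≤ C * ‖u h‖ := by
  let ev : t →ₗ[ℂ] Weight ℂ t g → ℂ := LinearMap.pi fun α => α.toLinear
  have hev : LinearMap.ker ev = ⊥ :=
    LinearMap.ker_eq_bot.2 fun h k hhk => eq_of_forall_weight_eq (congrFun hhk)
  obtain ⟨K, -, hK⟩ := ev.exists_antilipschitzWith hev
  obtain ⟨C, hC⟩ := exists_norm_lie_le g
  have eigenvalue_le (u : g ≃ₗ[ℂ] g) (hu : u ∈ adjointGroup g) (h : t) (α : Weight ℂ t g) :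
      ‖α h‖ ≤ C * ‖u h‖ := by
    obtain ⟨v, hv, hv0⟩ := α.exists_ne_zero
    have hlie : ⁅u h, u v⁆ = α h • u v := by
      rw [← map_lie_of_mem_adjointGroup hu, ← map_smul]
      exact congrArg u (IsKilling.lie_eq_smul_of_mem_rootSpace hv h)
    have hle := hC (u h) (u v)
    rw [hlie, norm_smul] at hle
    exact le_of_mul_le_mul_right hle (norm_pos_iff.2 (by simpa using hv0))
  refine ⟨K * |C|, by positivity, fun u hu h => ?_⟩
  calc ‖h‖ ≤ K * ‖ev h‖ := by simpa using hK.le_mul_norm_sub h 0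
    _ ≤ K * (|C| * ‖u h‖) := by
      gcongr
      refine (pi_norm_le_iff_of_nonneg (by positivity)).2 fun α => ?_
      exact (eigenvalue_le u hu h α).trans (by gcongr; exact le_abs_self C)
    _ = K * |C| * ‖u h‖ := (mul_assoc _ _ _).symm

lemma exists_norm_le_of_apply_eq (hP : IsPolyFun P)
    (hF : ∀ u ∈ adjointGroup g, ∀ h : t, IsRegular ℂ (h : g) → F (u h) = P h) :
    ∃ (C : ℝ) (d : ℕ), ∀ y, IsRegular ℂ y → ‖F y‖ ≤ C * (1 + ‖y‖) ^ d := by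
  obtain ⟨C, d, hC⟩ := hP.exists_norm_le
  obtain ⟨K, hK, hKu⟩ := exists_norm_le_of_mem_adjointGroup t
  have hC0 : 0 ≤ C := (norm_nonneg _).trans (by simpa using hC 0)
  refine ⟨C * (1 + K) ^ d, d, fun y hy => ?_⟩
  obtain ⟨u, hu, h, hh, rfl⟩ := exists_mem_adjointGroup_apply_eq t hy
  have hle : 1 + ‖h‖ ≤ (1 + K) * (1 + ‖u h‖) := by
    have := norm_nonneg (u h)
    linarith [hKu u hu h]
  calc ‖F (u h)‖ = ‖P h‖ := by rw [hF u hu h hh]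
    _ ≤ C * (1 + ‖h‖) ^ d := hC h
    _ ≤ C * ((1 + K) * (1 + ‖u h‖)) ^ d := by gcongr
    _ = C * (1 + K) ^ d * (1 + ‖u h‖) ^ d := by rw [mul_pow, mul_assoc]

theorem exists_isPolyFun_eq_of_weylGroup_invariant (hP : IsPolyFun P)
    (hinv : ∀ w ∈ weylGroup t, ∀ h, P (w h) = P h) :
    ∃ Q : g → ℂ, IsPolyFun Q ∧ (∀ u ∈ adjointGroup g, ∀ y, Q (u y) = Q y) ∧
      ∀ h : t, Q h = P h := by
  obtain ⟨F, hF⟩ := exists_apply_eq_of_weylGroup_invariant hinv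
  obtain ⟨C, d, hC⟩ := exists_norm_le_of_apply_eq hP hF
  have hD := isPolyFun_charpoly_ad_coeff g (rank ℂ g)
  obtain ⟨x, hx, -⟩ := exists_engel_eq_and_injective_weight t
  have hxD := (isRegular_def ℂ _).1 ((engel_eq_iff_isRegular x.2).1 hx)
  obtain ⟨Q, hQ, hQF⟩ : ∃ Q, IsPolyFun Q ∧ ∀ y, IsRegular ℂ y → Q y = F y := by
    simp only [isRegular_def] at hC ⊢
    exact exists_isPolyFun_eq_of_analyticAt hD hxD
      (fun y hy => analyticAt_of_apply_eq hP hF ((isRegular_def ℂ y).2 hy)) hC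
  refine ⟨Q, hQ, fun u hu => congrFun ?_, congrFun ?_⟩
  · refine (hQ.comp_linearMap u.toLinearMap).eq_of_forall_ne_zero hQ hD hxD fun y hy => ?_
    obtain ⟨v, hv, h, hh, rfl⟩ := exists_mem_adjointGroup_apply_eq t ((isRegular_def ℂ y).2 hy)
    calc Q (u (v h)) = F (u (v h)) := hQF _ <| by
          rwa [isRegular_iff_of_mem_adjointGroup hu, isRegular_iff_of_mem_adjointGroup hv]
      _ = P h := hF (u * v) (mul_mem hu hv) h hh
      _ = F (v h) := (hF v hv h hh).symm
      _ = Q (v h) := (hQF _ ((isRegular_iff_of_mem_adjointGroup hv _).2 hh)).symm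
  · refine (hQ.comp_linearMap t.toSubmodule.subtype).eq_of_forall_ne_zero hP
      (hD.comp_linearMap t.toSubmodule.subtype) (x := x) hxD fun h hh => ?_
    have hreg := (isRegular_def ℂ (h : g)).2 hh
    exact (hQF h hreg).trans (hF 1 (one_mem _) h hreg)

end ChevalleyRestriction

section TraceDerivative

lemma hasDerivAt_linearMap_add_smul_pow {𝕜 R : Type*} [NontriviallyNormedField 𝕜] [Ring R]
    [Algebra 𝕜 R] (A B : R) (n : ℕ) (L : R →ₗ[𝕜] 𝕜) :
    HasDerivAt (fun s : 𝕜 => L ((A + s • B) ^ n))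
      (L (∑ i ∈ Finset.range n, A ^ i * B * A ^ (n - 1 - i))) 0 := by
  induction n generalizing L with
  | zero => simpa using hasDerivAt_const (0 : 𝕜) (L 1)
  | succ n ih =>
    have expand : (fun s : 𝕜 => L ((A + s • B) ^ (n + 1))) = fun s =>
        (L ∘ₗ LinearMap.mulRight 𝕜 A) ((A + s • B) ^ n) +
          s * (L ∘ₗ LinearMap.mulRight 𝕜 B) ((A + s • B) ^ n) := by
      ext s
      simp [pow_succ, mul_add]
    have shift : ∑ i ∈ Finset.range n, A ^ i * B * A ^ (n + 1 - 1 - i) =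
        (∑ i ∈ Finset.range n, A ^ i * B * A ^ (n - 1 - i)) * A := by
      rw [Finset.sum_mul]
      refine Finset.sum_congr rfl fun i hi => ?_
      have hin : n + 1 - 1 - i = n - 1 - i + 1 := by have := Finset.mem_range.1 hi; omega
      rw [hin, pow_succ, mul_assoc, mul_assoc, mul_assoc]
    rw [expand, Finset.sum_range_succ, shift]
    refine ((ih (L ∘ₗ LinearMap.mulRight 𝕜 A)).add
      ((hasDerivAt_id (0 : 𝕜)).mul (ih (L ∘ₗ LinearMap.mulRight 𝕜 B)))).congr_deriv ?_
    simp [Finset.sum_mul]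

lemma hasDerivAt_trace_add_smul_pow {𝕜 V : Type*} [NontriviallyNormedField 𝕜] [AddCommGroup V]
    [Module 𝕜 V] (A B : Module.End 𝕜 V) (n : ℕ) :
    HasDerivAt (fun s : 𝕜 => LinearMap.trace 𝕜 V ((A + s • B) ^ (n + 1)))
      ((n + 1) * LinearMap.trace 𝕜 V (A ^ n * B)) 0 := by
  refine (hasDerivAt_linearMap_add_smul_pow A B (n + 1) (LinearMap.trace 𝕜 V)).congr_deriv ?_
  have cyclic : ∀ i ∈ Finset.range (n + 1), LinearMap.trace 𝕜 V (A ^ i * B * A ^ (n + 1 - 1 - i)) =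
      LinearMap.trace 𝕜 V (A ^ n * B) := fun i hi => by
    have hin : n + 1 - 1 - i + i = n := by have := Finset.mem_range.1 hi; omega
    rw [LinearMap.trace_mul_comm, ← mul_assoc, ← pow_add, hin]
  rw [map_sum, Finset.sum_congr rfl cyclic]
  simp

end TraceDerivative

section PrimeGroupAdjoint

open LieAlgebra Polynomial

lemma lie_eq_zero_of_commute {K L : Type*} [Field K] [LieRing L] [LieAlgebra K L]
    [FiniteDimensional K L] [IsKilling K L] {T : Module.End K L} {y c : L}
    (hT : Commute T (ad K L y))
    (hc : ∀ v, killingForm K L c v = LinearMap.trace K L (T * ad K L v)) : ⁅y, c⁆ = 0 := by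
  refine (IsKilling.killingForm_nondegenerate K L).1 _ fun v => ?_
  have had : ad K L ⁅y, v⁆ = ad K L y * ad K L v - ad K L v * ad K L y :=
    LinearMap.ext (lie_lie y v)
  rw [← lie_skew, map_neg, LinearMap.neg_apply, LieModule.traceForm_apply_lie_apply, neg_eq_zero]
  rw [hc, had, mul_sub, map_sub, ← mul_assoc, hT.eq, mul_assoc, LinearMap.trace_mul_comm,
    mul_assoc, sub_self]

variable {g : Type*} [LieRing g] [LieAlgebra ℂ g] [FiniteDimensional ℂ g] {φ : g ≃ₗ[ℂ] g}

lemma isRegular_of_mem_primeGroup (hφ : φ ∈ primeGroup (adjointGroup g)) {x : g}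
    (hx : IsRegular ℂ x) : IsRegular ℂ (φ x) := by
  rw [isRegular_def] at hx ⊢
  rwa [hφ _ (isPolyFun_charpoly_ad_coeff g (rank ℂ g)) fun u hu y => by
    rw [charpoly_ad_of_mem_adjointGroup hu]]

-- `n + 1` times both sides are the derivatives at `y` of the invariant polynomial
-- `tr ((ad y) ^ (n + 1))`, in the directions `φ v` and `v`.
lemma trace_ad_pow_mul_ad_of_mem_primeGroup (hφ : φ ∈ primeGroup (adjointGroup g)) (y v : g)
    (n : ℕ) : LinearMap.trace ℂ g (ad ℂ g (φ y) ^ n * ad ℂ g (φ v)) =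
      LinearMap.trace ℂ g (ad ℂ g y ^ n * ad ℂ g v) := by
  have hinv := hφ (fun z => LinearMap.trace ℂ g (ad ℂ g z ^ (n + 1)))
    (IsPolyFun.linearMap_pow (ad ℂ g : g →ₗ[ℂ] Module.End ℂ g) _ _)
    (fun u hu z => trace_ad_pow_of_mem_adjointGroup hu z _)
  have hline : (fun s : ℂ => LinearMap.trace ℂ g ((ad ℂ g (φ y) + s • ad ℂ g (φ v)) ^ (n + 1))) =
      fun s => LinearMap.trace ℂ g ((ad ℂ g y + s • ad ℂ g v) ^ (n + 1)) := by
    ext s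
    simpa using hinv (y + s • v)
  have hderiv := hasDerivAt_trace_add_smul_pow (ad ℂ g (φ y)) (ad ℂ g (φ v)) n
  rw [hline] at hderiv
  exact mul_left_cancel₀ (mod_cast n.succ_ne_zero)
    (hderiv.unique (hasDerivAt_trace_add_smul_pow (ad ℂ g y) (ad ℂ g v) n))

lemma trace_aeval_ad_mul_ad_of_mem_primeGroup (hφ : φ ∈ primeGroup (adjointGroup g)) (y v : g)
    (q : ℂ[X]) : LinearMap.trace ℂ g (aeval (ad ℂ g (φ y)) q * ad ℂ g (φ v)) =
      LinearMap.trace ℂ g (aeval (ad ℂ g y) q * ad ℂ g v) := by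
  simp only [aeval_eq_sum_range, Finset.sum_mul, map_sum, smul_mul_assoc, map_smul,
    trace_ad_pow_mul_ad_of_mem_primeGroup hφ]

variable [IsKilling ℂ g]

lemma lie_eq_zero_of_mem_primeGroup (hφ : φ ∈ primeGroup (adjointGroup g)) {y c : g} {q : ℂ[X]}
    (hq : aeval (ad ℂ g y) q = ad ℂ g c) : ⁅φ y, φ c⁆ = 0 := by
  have hT : Commute (aeval (ad ℂ g (φ y)) q) (ad ℂ g (φ y)) := by
    simpa using (Commute.all q X).map (aeval (ad ℂ g (φ y)))
  refine lie_eq_zero_of_commute hT fun v => ?_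
  obtain ⟨v, rfl⟩ := φ.surjective v
  rw [killingForm_apply_apply, trace_aeval_ad_mul_ad_of_mem_primeGroup hφ, hq]
  simpa only [pow_one, Module.End.mul_eq_comp] using
    trace_ad_pow_mul_ad_of_mem_primeGroup hφ c v 1

variable {t : LieSubalgebra ℂ g} [t.IsCartanSubalgebra]

lemma mem_primeGroup_weylGroup {ψ : t ≃ₗ[ℂ] t} (hφ : φ ∈ primeGroup (adjointGroup g))
    (hψ : ∀ h : t, ψ h = φ h) : ψ ∈ primeGroup (weylGroup t) := by
  intro P hP hinv h
  obtain ⟨Q, hQ, hQinv, hQP⟩ := exists_isPolyFun_eq_of_weylGroup_invariant hP hinv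
  rw [← hQP, ← hQP, hψ]
  exact hφ Q hQ hQinv h

lemma exists_mem_adjointGroup_mapsTo (t : LieSubalgebra ℂ g) [t.IsCartanSubalgebra]
    (hφ : φ ∈ primeGroup (adjointGroup g)) :
    ∃ u ∈ adjointGroup g, ∀ h ∈ t, (u * φ) h ∈ t := by
  obtain ⟨x, hx, hinj⟩ := exists_engel_eq_and_injective_weight t
  have hreg : IsRegular ℂ (x : g) := (engel_eq_iff_isRegular x.2).1 hx
  obtain ⟨u, hu, hut⟩ :=
    exists_mem_adjointGroup_engel_eq t (isRegular_of_mem_primeGroup hφ hreg)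
  refine ⟨u, hu, fun h hh => ?_⟩
  obtain ⟨q, hq⟩ := exists_aeval_ad_eq hinj ⟨h, hh⟩
  have hlie : ⁅(u * φ) x, (u * φ) h⁆ = 0 :=
    lie_eq_zero_of_mem_primeGroup (mul_mem (le_primeGroup _ hu) hφ) hq
  rw [← hut, LieSubalgebra.mem_engel_iff]
  exact ⟨1, by simpa using hlie⟩

end PrimeGroupAdjoint

theorem stmt1_general (g : Type*) [LieRing g] [LieAlgebra ℂ g] [FiniteDimensional ℂ g]
    [LieAlgebra.IsKilling ℂ g] (t : LieSubalgebra ℂ g) [t.IsCartanSubalgebra]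
    (φ : g ≃ₗ[ℂ] g) (hφ : φ ∈ primeGroup (adjointGroup g)) :
    ∃ u ∈ adjointGroup g, ∀ x ∈ t, (u * φ) x = x := by
  obtain ⟨u, hu, hut⟩ := exists_mem_adjointGroup_mapsTo t hφ
  have huφ : u * φ ∈ primeGroup (adjointGroup g) := mul_mem (le_primeGroup _ hu) hφ
  let ψ : t →ₗ[ℂ] t := (u * φ).toLinearMap.restrict (p := t.toSubmodule) hut
  have hinj : Function.Injective ψ := fun a b hab =>
    Subtype.ext ((u * φ).injective (congrArg Subtype.val hab))
  obtain ⟨v, hv, hvψ⟩ : LinearEquiv.ofInjectiveEndo ψ hinj ∈ weylGroup t := by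
    rw [← primeGroup_eq_self_of_finite (weylGroup t)]
    exact mem_primeGroup_weylGroup huφ fun _ => rfl
  exact ⟨v⁻¹ * u, mul_mem (inv_mem hv) hu, fun x hx =>
    (LinearEquiv.symm_apply_eq v).2 (hvψ ⟨x, hx⟩).symm⟩

/-- Let `g` be a complex simple Lie algebra, `G = Aut(g)⁰` its adjoint
group acting on `g`, and `t ⊆ g` a fixed Cartan subalgebra.  For every `φ ∈ G'` there is
an element `u ∈ G` such that `u ∘ φ` restricted to `t` is the identity map on `t`. -/
theorem stmt1 (g : Type) [LieRing g] [LieAlgebra ℂ g] [FiniteDimensional ℂ g]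
    [LieAlgebra.IsSimple ℂ g]
    (t : LieSubalgebra ℂ g) [t.IsCartanSubalgebra]
    (φ : g ≃ₗ[ℂ] g) (hφ : φ ∈ primeGroup (adjointGroup g)) :
    ∃ u ∈ adjointGroup g, ∀ x ∈ t, (u * φ) x = x :=
  stmt1_general g t φ hφ
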